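/- arXiv:1807.01188 — 9 statements merged into one kernel-verified Lean document; each statement's English description precedes it below -/
import Mathlib

section
/- Let G be a finite simple graph with p vertices and q ≥ 1 edges and no isolated vertices, and let k ≥ 1. If f is a k-super graceful labeling of G, then each of the k largest integers p+q, p+q+1, …, k+p+q−1 in {k, …, k+p+q−1} is the label f(v) of some vertex v, these k vertices are pairwise non-adjacent, and no two of the k+1 smallest integers k, k+1, …, 2k are labels of two adjacent vertices. -/
/-- `f : V ⊕ E(G) → ℕ` is a `k`-super graceful labeling of `G`:
a bijection from vertices and edges onto `{k, …, k+p+q-1}` with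
`f(uv) = |f(u) - f(v)|` for every edge `uv`. -/
def IsKSuperGraceful {V : Type} [Fintype V] (G : SimpleGraph V) (k : ℕ)
    (f : V ⊕ G.edgeSet → ℕ) : Prop :=
  Function.Injective f ∧
  Set.range f = Set.Icc k (k + Fintype.card V + G.edgeSet.ncard - 1) ∧
  ∀ (u v : V) (h : G.Adj u v),
    f (Sum.inr ⟨s(u, v), (G.mem_edgeSet).mpr h⟩) =
      max (f (Sum.inl u)) (f (Sum.inl v)) - min (f (Sum.inl u)) (f (Sum.inl v))

/-- If `f` is a `k`-super graceful labeling of `G`, then the `k` largest labels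
`p+q, …, k+p+q-1` are labels of vertices, those vertices are pairwise non-adjacent,
and no two of the `k+1` smallest labels `k, …, 2k` label adjacent vertices. -/
theorem stmt_0 {V : Type} [Fintype V] (G : SimpleGraph V) (k : ℕ) (hk : 1 ≤ k)
    (hq : 1 ≤ G.edgeSet.ncard) (hiso : ∀ v : V, ∃ u : V, G.Adj v u)
    (f : V ⊕ G.edgeSet → ℕ) (hf : IsKSuperGraceful G k f) :
    (∀ m ∈ Set.Icc (Fintype.card V + G.edgeSet.ncard)
        (k + Fintype.card V + G.edgeSet.ncard - 1), ∃ v : V, f (Sum.inl v) = m) ∧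
    (∀ u v : V,
        f (Sum.inl u) ∈ Set.Icc (Fintype.card V + G.edgeSet.ncard)
          (k + Fintype.card V + G.edgeSet.ncard - 1) →
        f (Sum.inl v) ∈ Set.Icc (Fintype.card V + G.edgeSet.ncard)
          (k + Fintype.card V + G.edgeSet.ncard - 1) →
        ¬ G.Adj u v) ∧
    (∀ u v : V, G.Adj u v →
        ¬ (f (Sum.inl u) ∈ Set.Icc k (2 * k) ∧ f (Sum.inl v) ∈ Set.Icc k (2 * k))) := by
  obtain ⟨hinj, hrange, hedge⟩ := hf
  have hb : ∀ x, k ≤ f x ∧ f x ≤ k + Fintype.card V + G.edgeSet.ncard - 1 := by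
    intro x
    have : f x ∈ Set.range f := ⟨x, rfl⟩
    rw [hrange] at this
    exact this
  -- every edge label is at most `p + q - 1`
  have hle : ∀ e : G.edgeSet, f (Sum.inr e) + 1 ≤ Fintype.card V + G.edgeSet.ncard := by
    rintro ⟨e, he⟩
    induction e using Sym2.ind with
    | _ u v =>
      have h1 := hedge u v ((G.mem_edgeSet).mp he)
      have h2 := hb (Sum.inl u)
      have h3 := hb (Sum.inl v)
      omega
  refine ⟨?_, ?_, ?_⟩
  · rintro m ⟨hm1, hm2⟩
    obtain ⟨e, he⟩ : G.edgeSet.Nonempty := by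
      apply Set.nonempty_of_ncard_ne_zero
      omega
    have h1 := hle ⟨e, he⟩
    have h2 := hb (Sum.inr ⟨e, he⟩)
    have hm : m ∈ Set.range f := by
      rw [hrange]
      exact ⟨by omega, hm2⟩
    obtain ⟨x, hx⟩ := hm
    rcases x with v | e'
    · exact ⟨v, hx⟩
    · have := hle e'
      omega
  · rintro u v ⟨hu1, hu2⟩ ⟨hv1, hv2⟩ huv
    have h1 := hedge u v huv
    have h2 := hb (Sum.inr ⟨s(u, v), (G.mem_edgeSet).mpr huv⟩)
    omega
  · rintro u v huv ⟨⟨hu1, hu2⟩, ⟨hv1, hv2⟩⟩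
    have h1 := hedge u v huv
    have h2 := hb (Sum.inr ⟨s(u, v), (G.mem_edgeSet).mpr huv⟩)
    have h3 : f (Sum.inr ⟨s(u, v), (G.mem_edgeSet).mpr huv⟩) ≠ f (Sum.inl u) :=
      fun h => by simpa using hinj h
    have h4 : f (Sum.inr ⟨s(u, v), (G.mem_edgeSet).mpr huv⟩) ≠ f (Sum.inl v) :=
      fun h => by simpa using hinj h
    omega
end

section
/- Let G be a finite simple graph with p vertices and q ≥ 1 edges and no isolated vertices. If G is k-super graceful for some integer k ≥ 1, then 1 ≤ k ≤ α(G), where α(G) is the independence number of G (the maximum size of a set of pairwise non-adjacent vertices of G). -/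
/-- If `G` (with at least one edge and no isolated vertex) is `k`-super graceful,
then `1 ≤ k ≤ α(G)`: in particular there is an independent set of size at least `k`. -/
theorem stmt_1 {V : Type} [Fintype V] [DecidableEq V] (G : SimpleGraph V) (k : ℕ)
    (hk : 1 ≤ k) (hq : 1 ≤ G.edgeSet.ncard) (hiso : ∀ v : V, ∃ u : V, G.Adj v u)
    (hsg : ∃ f : V ⊕ G.edgeSet → ℕ, IsKSuperGraceful G k f) :
    1 ≤ k ∧ ∃ s : Finset V,
      (∀ u ∈ s, ∀ v ∈ s, u ≠ v → ¬ G.Adj u v) ∧ k ≤ s.card := by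
  refine ⟨hk, ?_⟩
  obtain ⟨f, hinj, hrange, hedge⟩ := hsg
  set N := k + Fintype.card V + G.edgeSet.ncard - 1 with hN
  have hmem : ∀ x, k ≤ f x ∧ f x ≤ N := by
    intro x
    have hx : f x ∈ Set.Icc k N := by
      rw [← hrange]
      exact ⟨x, rfl⟩
    exact hx
  -- every edge label is at most `N - k`
  have hle : ∀ e, f (Sum.inr e) + k ≤ N := by
    rintro ⟨e, he⟩
    induction e using Sym2.ind with
    | _ u v =>
      have h := hedge u v ((G.mem_edgeSet).mp he)
      have h1 := hmem (Sum.inl u)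
      have h2 := hmem (Sum.inl v)
      rw [h]
      omega
  have h2k : 2 * k ≤ N := by
    have hne : G.edgeSet.Nonempty := Set.nonempty_of_ncard_ne_zero (by omega)
    obtain ⟨e, he⟩ := hne
    have h1 := hle ⟨e, he⟩
    have h2 := hmem (Sum.inr ⟨e, he⟩)
    omega
  refine ⟨Finset.univ.filter (fun v => N - k < f (Sum.inl v)), ?_, ?_⟩
  · intro u hu v hv _ hadj
    simp only [Finset.mem_filter, Finset.mem_univ, true_and] at hu hv
    have h := hedge u v hadj
    have h0 := hmem (Sum.inr ⟨s(u, v), (G.mem_edgeSet).mpr hadj⟩)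
    rw [h] at h0
    have h1 := hmem (Sum.inl u)
    have h2 := hmem (Sum.inl v)
    omega
  · have hsub : Finset.Ioc (N - k) N ⊆
        (Finset.univ.filter (fun v => N - k < f (Sum.inl v))).image
          (fun v => f (Sum.inl v)) := by
      intro n hn
      rw [Finset.mem_Ioc] at hn
      have hr : n ∈ Set.range f := by
        rw [hrange]
        exact ⟨by omega, hn.2⟩
      obtain ⟨x, rfl⟩ := hr
      cases x with
      | inl v => exact Finset.mem_image.mpr ⟨v, by simpa using hn.1, rfl⟩
      | inr e =>
        have := hle e
        omega
    have hc := (Finset.card_le_card hsub).trans Finset.card_image_le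
    rw [Nat.card_Ioc] at hc
    omega
end

section
/- Let G be a finite simple graph with p vertices and q ≥ 1 edges and no isolated vertices, and let k ≥ 1. If G admits a k-super graceful labeling f in which f(v) is odd for every vertex v, then p = q + 1 and k = 1. -/
/-- If `G` admits a `k`-super graceful labeling with every vertex label odd,
then `G` is a `(q+1, q)`-graph and `k = 1`. -/
theorem stmt_2 {V : Type} [Fintype V] (G : SimpleGraph V) (k : ℕ) (hk : 1 ≤ k)
    (hq : 1 ≤ G.edgeSet.ncard) (hiso : ∀ v : V, ∃ u : V, G.Adj v u)
    (f : V ⊕ G.edgeSet → ℕ) (hf : IsKSuperGraceful G k f)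
    (hodd : ∀ v : V, Odd (f (Sum.inl v))) :
    Fintype.card V = G.edgeSet.ncard + 1 ∧ k = 1 := by
  obtain ⟨hinj, hran, hE⟩ := hf
  have hne : G.edgeSet.Nonempty := by
    apply Set.nonempty_of_ncard_ne_zero
    omega
  obtain ⟨e0, he0⟩ := hne
  have hp : 1 ≤ Fintype.card V := by
    induction e0 using Sym2.ind with
    | _ a b => exact Fintype.card_pos_iff.mpr ⟨a⟩
  generalize hQ : G.edgeSet.ncard = q at *
  generalize hP : Fintype.card V = p at *
  have hmem : ∀ x, k ≤ f x ∧ f x ≤ k + p + q - 1 := by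
    intro x
    have : f x ∈ Set.range f := ⟨x, rfl⟩
    rw [hran] at this
    exact this
  -- every even label in range is a difference of vertex labels
  have hev : ∀ n, k ≤ n → n ≤ k + p + q - 1 → Even n →
      ∃ u v : V, f (Sum.inl u) = n + f (Sum.inl v) := by
    intro n h1 h2 h3
    have : n ∈ Set.range f := by rw [hran]; exact ⟨h1, h2⟩
    obtain ⟨x, hx⟩ := this
    rcases x with v | ⟨e, he⟩
    · have := hodd v
      rw [hx] at this
      exact absurd h3 (Nat.not_even_iff_odd.mpr this)
    · induction e using Sym2.ind with
      | _ a b =>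
        have h := hE a b ((G.mem_edgeSet).mp he)
        rw [hx] at h
        rcases le_total (f (Sum.inl a)) (f (Sum.inl b)) with hab | hab
        · rw [max_eq_right hab, min_eq_left hab] at h
          exact ⟨b, a, by omega⟩
        · rw [max_eq_left hab, min_eq_right hab] at h
          exact ⟨a, b, by omega⟩
  have hedge : ∀ e, Even (f (Sum.inr e)) := by
    rintro ⟨e, he⟩
    induction e using Sym2.ind with
    | _ a b =>
      have h := hE a b ((G.mem_edgeSet).mp he)
      rw [h]
      obtain ⟨i, hi⟩ := hodd a
      obtain ⟨j, hj⟩ := hodd b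
      rw [hi, hj, Nat.even_iff]
      omega
  have hM : Odd (k + p + q - 1) := by
    by_contra hc
    rw [Nat.not_odd_iff_even] at hc
    obtain ⟨u, v, huv⟩ := hev _ (by omega) le_rfl hc
    have := hmem (Sum.inl u)
    have := hmem (Sum.inl v)
    omega
  obtain ⟨m, hm⟩ := hM
  have hk1 : k = 1 := by
    obtain ⟨u, v, huv⟩ := hev (2 * m) (by omega) (by omega) (even_two_mul m)
    have := hmem (Sum.inl u)
    have := hmem (Sum.inl v)
    omega
  refine ⟨?_, hk1⟩
  have him : Finset.univ.image (fun v : V => f (Sum.inl v)) =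
      (Finset.range (m + 1)).image (fun i => 2 * i + 1) := by
    ext n
    simp only [Finset.mem_image, Finset.mem_univ, true_and, Finset.mem_range]
    constructor
    · rintro ⟨v, rfl⟩
      obtain ⟨i, hi⟩ := hodd v
      have := hmem (Sum.inl v)
      exact ⟨i, by omega, by omega⟩
    · rintro ⟨i, hi, rfl⟩
      have : 2 * i + 1 ∈ Set.range f := by
        rw [hran]; exact ⟨by omega, by omega⟩
      obtain ⟨x, hx⟩ := this
      rcases x with v | e
      · exact ⟨v, hx⟩
      · obtain ⟨j, hj⟩ := hedge e
        omega
  have hc := congrArg Finset.card him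
  rw [Finset.card_image_of_injective _ (fun a b h => Sum.inl_injective (hinj h)),
    Finset.card_image_of_injective _ (fun a b h => by simpa using h),
    Finset.card_univ, Finset.card_range] at hc
  omega
end

section
/- Let G be a finite simple graph with q ≥ 1 edges, exactly q+1 vertices, and no isolated vertices. Then the following three statements are equivalent: (i) G admits a 1-super graceful labeling whose set of edge labels is exactly {1, 2, …, q}; (ii) G is graceful; (iii) G admits a 1-super graceful labeling in which every vertex label is odd. -/
theorem aux_edge {V : Type} (G : SimpleGraph V) (g : V → ℕ) :
    ∃ d : G.edgeSet → ℕ, ∀ (u v : V) (h : G.Adj u v),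
      d ⟨s(u, v), (G.mem_edgeSet).mpr h⟩ = max (g u) (g v) - min (g u) (g v) :=
  ⟨fun e => Sym2.lift ⟨fun u v => max (g u) (g v) - min (g u) (g v),
    fun u v => by simp only [max_comm, min_comm]⟩ e.1, fun u v h => rfl⟩

theorem aux_range {A : Type} [Finite A] (f : A → ℕ) (hf : Function.Injective f) (n : ℕ)
    (hn : Nat.card A = n) (h : ∀ a, 1 ≤ f a ∧ f a ≤ n) : Set.range f = Set.Icc 1 n := by
  apply Set.eq_of_subset_of_ncard_le
  · rintro _ ⟨a, rfl⟩
    exact h a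
  · rw [Set.ncard_range_of_injective hf, hn, ← Finset.coe_Icc, Set.ncard_coe_finset]
    simp
  · exact Set.finite_Icc 1 n

/-- For a `(q+1, q)`-graph `G` the following are equivalent:
(i) `G` has a super graceful labeling with edge-label set `{1, …, q}`;
(ii) `G` is graceful;
(iii) `G` has a super graceful labeling with all vertex labels odd. -/
theorem stmt_3 {V : Type} [Fintype V] (G : SimpleGraph V)
    (hq : 1 ≤ G.edgeSet.ncard) (hp : Fintype.card V = G.edgeSet.ncard + 1)
    (hiso : ∀ v : V, ∃ u : V, G.Adj v u) :
    ((∃ f : V ⊕ G.edgeSet → ℕ, IsKSuperGraceful G 1 f ∧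
        Set.range (fun e : G.edgeSet => f (Sum.inr e)) = Set.Icc 1 G.edgeSet.ncard) ↔
      (∃ g : V → ℕ, (∀ v : V, g v ≤ G.edgeSet.ncard) ∧ Function.Injective g ∧
        ∀ (u v x y : V), G.Adj u v → G.Adj x y →
          max (g u) (g v) - min (g u) (g v) = max (g x) (g y) - min (g x) (g y) →
          s(u, v) = s(x, y))) ∧
    ((∃ g : V → ℕ, (∀ v : V, g v ≤ G.edgeSet.ncard) ∧ Function.Injective g ∧
        ∀ (u v x y : V), G.Adj u v → G.Adj x y →
          max (g u) (g v) - min (g u) (g v) = max (g x) (g y) - min (g x) (g y) →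
          s(u, v) = s(x, y)) ↔
      (∃ f : V ⊕ G.edgeSet → ℕ, IsKSuperGraceful G 1 f ∧
        ∀ v : V, Odd (f (Sum.inl v)))) := by
  classical
  set q := G.edgeSet.ncard with hqd
  have hcE : Nat.card G.edgeSet = q := Nat.card_coe_set_eq _
  have hcV : Nat.card V = q + 1 := by rw [Nat.card_eq_fintype_card, hp]
  have hcS : Nat.card (V ⊕ G.edgeSet) = 1 + Fintype.card V + q - 1 := by
    rw [Nat.card_sum, hcE, hcV, hp]; omega
  have key : ∀ g : V → ℕ, (∀ v : V, g v ≤ q) → Function.Injective g →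
      (∀ (u v x y : V), G.Adj u v → G.Adj x y →
          max (g u) (g v) - min (g u) (g v) = max (g x) (g y) - min (g x) (g y) →
          s(u, v) = s(x, y)) →
      ∃ d : G.edgeSet → ℕ, (∀ (u v : V) (h : G.Adj u v),
        d ⟨s(u, v), (G.mem_edgeSet).mpr h⟩ = max (g u) (g v) - min (g u) (g v)) ∧
        Function.Injective d ∧ ∀ e, 1 ≤ d e ∧ d e ≤ q := by
    intro g hg hi h
    obtain ⟨d, hd⟩ := aux_edge G g
    refine ⟨d, hd, ?_, ?_⟩
    · rintro ⟨e, he⟩ ⟨e', he'⟩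
      induction e using Sym2.ind with | _ u v
      induction e' using Sym2.ind with | _ x y
      intro hh
      have := h u v x y he he' (by rw [← hd u v he, ← hd x y he']; exact hh)
      exact Subtype.ext this
    · rintro ⟨e, he⟩
      induction e using Sym2.ind with | _ u v
      have h0 := hd u v he
      have h1 : g u ≠ g v := fun hh => G.ne_of_adj he (hi hh)
      have := hg u
      have := hg v
      omega
  refine ⟨⟨?_, ?_⟩, ⟨?_, ?_⟩⟩
  · rintro ⟨f, ⟨hinj, hr, hf⟩, hE⟩
    have hb : ∀ v, q + 1 ≤ f (Sum.inl v) ∧ f (Sum.inl v) ≤ 2 * q + 1 := by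
      intro v
      have h1 : f (Sum.inl v) ∈ Set.range f := ⟨_, rfl⟩
      rw [hr, Set.mem_Icc] at h1
      have h2 : ¬ f (Sum.inl v) ∈ Set.Icc 1 q := by
        rw [← hE]
        rintro ⟨e, he⟩
        exact absurd (hinj he) (by simp)
      rw [Set.mem_Icc] at h2
      omega
    refine ⟨fun v => f (Sum.inl v) - (q + 1), ?_, ?_, ?_⟩
    · intro v
      have := hb v
      dsimp only
      omega
    · intro u v h
      have := hb u
      have := hb v
      dsimp only at h
      exact Sum.inl_injective (hinj (by omega))
    · intro u v x y h h' he
      dsimp only at he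
      have h1 := hf u v h
      have h2 := hf x y h'
      have := hb u
      have := hb v
      have := hb x
      have := hb y
      have h3 := hinj (h1.trans (Eq.trans (by omega) h2.symm))
      exact congrArg Subtype.val (Sum.inr_injective h3)
  · rintro ⟨g, hg, hi, h⟩
    obtain ⟨d, hd, hdi, hdb⟩ := key g hg hi h
    have hinj : Function.Injective (Sum.elim (fun v => g v + (q + 1)) d) := by
      apply Function.Injective.sumElim
      · intro u v h
        exact hi (by simpa using h)
      · exact hdi
      · intro v e
        have := hdb e
        omega
    refine ⟨Sum.elim (fun v => g v + (q + 1)) d, ⟨hinj, ?_, ?_⟩, ?_⟩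
    · rw [show 1 + Fintype.card V + G.edgeSet.ncard - 1 = 1 + Fintype.card V + q - 1 from rfl]
      apply aux_range _ hinj _ hcS
      rintro (v | e)
      · have := hg v
        simp only [Sum.elim_inl]
        omega
      · have := hdb e
        simp only [Sum.elim_inr]
        omega
    · intro u v h
      have := hd u v h
      simp only [Sum.elim_inl, Sum.elim_inr]
      omega
    · exact aux_range d hdi q hcE hdb
  · rintro ⟨g, hg, hi, h⟩
    obtain ⟨d, hd, hdi, hdb⟩ := key g hg hi h
    have hinj : Function.Injective (Sum.elim (fun v => 2 * g v + 1) (fun e => 2 * d e)) := by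
      apply Function.Injective.sumElim
      · intro u v h
        exact hi (by simpa using h)
      · intro u v h
        exact hdi (by simpa using h)
      · intro v e
        omega
    refine ⟨Sum.elim (fun v => 2 * g v + 1) (fun e => 2 * d e), ⟨hinj, ?_, ?_⟩, ?_⟩
    · rw [show 1 + Fintype.card V + G.edgeSet.ncard - 1 = 1 + Fintype.card V + q - 1 from rfl]
      apply aux_range _ hinj _ hcS
      rintro (v | e)
      · have := hg v
        simp only [Sum.elim_inl]
        omega
      · have := hdb e
        simp only [Sum.elim_inr]
        omega
    · intro u v h
      have := hd u v h
      simp only [Sum.elim_inl, Sum.elim_inr]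
      omega
    · intro v
      exact ⟨g v, rfl⟩
  · rintro ⟨f, ⟨hinj, hr, hf⟩, hodd⟩
    choose g hg using hodd
    refine ⟨g, ?_, ?_, ?_⟩
    · intro v
      have h1 : f (Sum.inl v) ∈ Set.range f := ⟨_, rfl⟩
      rw [hr, Set.mem_Icc] at h1
      have := hg v
      omega
    · intro u v h
      have h1 := hg u
      have h2 := hg v
      exact Sum.inl_injective (hinj (by omega))
    · intro u v x y h h' he
      have h1 := hf u v h
      have h2 := hf x y h'
      have := hg u
      have := hg v
      have := hg x
      have := hg y
      have h3 := hinj (h1.trans (Eq.trans (by omega) h2.symm))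
      exact congrArg Subtype.val (Sum.inr_injective h3)
end

section
/- Let n, k ≥ 1. If a k-Skolem sequence of length n exists, then: if k is even, n ≡ 0 or 3 (mod 4); and if k is odd, n ≡ 0 or 1 (mod 4). -/
/-- `(a i, b i)`, `i = 0, …, n-1`, is a `k`-Skolem sequence of length `n`:
`a i - b i = k + i` (i.e. `aᵢ - bᵢ = k + i - 1` for `1 ≤ i ≤ n` in 1-indexed form)
and the `2n` values `a i, b i` are mutually distinct elements of `{1, …, 2n}`. -/
def IsSkolemSeq (k n : ℕ) (a b : Fin n → ℕ) : Prop :=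
  Function.Injective (Sum.elim a b) ∧
  (∀ i : Fin n, a i ∈ Finset.Icc 1 (2 * n)) ∧
  (∀ i : Fin n, b i ∈ Finset.Icc 1 (2 * n)) ∧
  ∀ i : Fin n, a i = b i + (k + (i : ℕ))

/-- A `k`-Skolem sequence of length `n` exists only if `n ≡ 0, 3 (mod 4)` when `k`
is even, and `n ≡ 0, 1 (mod 4)` when `k` is odd. -/
theorem stmt_9 (n k : ℕ) (hn : 1 ≤ n) (hk : 1 ≤ k)
    (h : ∃ a b : Fin n → ℕ, IsSkolemSeq k n a b) :
    (Even k → n % 4 = 0 ∨ n % 4 = 3) ∧ (Odd k → n % 4 = 0 ∨ n % 4 = 1) := by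
  obtain ⟨a, b, hinj, ha, hb, hab⟩ := h
  have himg : (Finset.univ : Finset (Fin n ⊕ Fin n)).image (Sum.elim a b)
      = Finset.Icc 1 (2 * n) := by
    apply Finset.eq_of_subset_of_card_le
    · intro x hx
      obtain ⟨y, -, rfl⟩ := Finset.mem_image.1 hx
      rcases y with y | y
      · exact ha y
      · exact hb y
    · rw [Finset.card_image_of_injective _ hinj]
      simp
      omega
  have hsum : ∑ i, a i + ∑ i, b i = ∑ x ∈ Finset.Icc 1 (2 * n), x := by
    rw [← himg, Finset.sum_image (fun x _ y _ hxy => hinj hxy), Fintype.sum_sum_type]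
    rfl
  have hgauss : ∀ m : ℕ, 2 * ∑ x ∈ Finset.Icc 1 m, x = m * (m + 1) := by
    intro m
    induction m with
    | zero => simp
    | succ m ih =>
      rw [Finset.sum_Icc_succ_top (by omega), mul_add, ih]
      ring
  have hA : ∑ i, a i = ∑ i, b i + (n * k + ∑ i ∈ Finset.range n, i) := by
    rw [Finset.sum_congr rfl (fun i _ => hab i), Finset.sum_add_distrib,
      Finset.sum_add_distrib, Fin.sum_univ_eq_sum_range (fun i => i) n]
    simp
  have hr := Finset.sum_range_id_mul_two n
  have hg := hgauss (2 * n)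
  rw [← hsum, hA] at hg
  generalize ∑ i, b i = B at hg
  generalize ∑ i ∈ Finset.range n, i = R at hg hr
  obtain ⟨m, rfl⟩ : ∃ m, n = m + 1 := ⟨n - 1, by omega⟩
  rw [Nat.add_sub_cancel] at hr
  obtain ⟨q, r, hr4, rfl⟩ : ∃ q r, r < 4 ∧ m = 4 * q + r :=
    ⟨m / 4, m % 4, Nat.mod_lt _ (by norm_num), by omega⟩
  constructor
  · rintro ⟨j, rfl⟩
    interval_cases r <;> ring_nf at hg hr <;> omega
  · rintro ⟨j, rfl⟩
    interval_cases r <;> ring_nf at hg hr <;> omega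
end

section
/- For every integer k ≥ 1, there exists a k-Skolem sequence of length 2k − 1. -/
/-- For every `k ≥ 1`, there exists a `k`-Skolem sequence of length `2k - 1`. -/
theorem stmt_13 (k : ℕ) (hk : 1 ≤ k) :
    ∃ a b : Fin (2 * k - 1) → ℕ, IsSkolemSeq k (2 * k - 1) a b := by
  refine ⟨fun i => (if (i : ℕ) < k - 1 then 2 * k - 2 - 2 * (i : ℕ) else 4 * k - 3 - 2 * (i : ℕ))
      + (k + (i : ℕ)),
    fun i => if (i : ℕ) < k - 1 then 2 * k - 2 - 2 * (i : ℕ) else 4 * k - 3 - 2 * (i : ℕ),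
    ?_, ?_, ?_, fun i => rfl⟩
  · rintro (⟨i, hi⟩ | ⟨i, hi⟩) (⟨j, hj⟩ | ⟨j, hj⟩) h <;>
      simp only [Sum.elim_inl, Sum.elim_inr, Sum.inl.injEq, Sum.inr.injEq, Fin.mk.injEq,
        reduceCtorEq] at h ⊢ <;> split_ifs at h <;> omega
  · rintro ⟨i, hi⟩
    simp only [Finset.mem_Icc]
    split_ifs <;> omega
  · rintro ⟨i, hi⟩
    simp only [Finset.mem_Icc]
    split_ifs <;> omega
end

section
/- Let G be a finite simple graph with q ≥ 1 edges and no isolated vertices, and let k ≥ 1. Then G admits a k-super graceful labeling in which every edge label is an odd integer if and only if k = 1 and G is isomorphic to the star K(1, q) (the complete bipartite graph with parts of sizes 1 and q). -/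
theorem aux_odd_even (k N : ℕ) :
    ((Finset.Icc k N).filter Odd).card ≤ ((Finset.Icc k N).filter Even).card + 1 := by
  have h : (((Finset.Icc k N).filter Odd).erase N).card ≤
      ((Finset.Icc k N).filter Even).card := by
    apply Finset.card_le_card_of_injOn (fun x => x + 1)
    · intro x hx
      simp only [Finset.coe_erase, Finset.coe_filter, Finset.mem_Icc, Set.mem_sdiff,
        Set.mem_ofPred_eq, Set.mem_singleton_iff] at hx ⊢
      obtain ⟨⟨⟨h1, h2⟩, h3⟩, h4⟩ := hx
      exact ⟨⟨by omega, by omega⟩, h3.add_one⟩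
    · intro x _ y _ h
      simpa using h
  have := Finset.pred_card_le_card_erase (s := (Finset.Icc k N).filter Odd) (a := N)
  omega

theorem aux_star {V : Type} [Fintype V] (G : SimpleGraph V) (q : ℕ) (c : V)
    (hc : Fintype.card V = q + 1)
    (h : ∀ u v, G.Adj u v ↔ (u = c ∧ v ≠ c) ∨ (v = c ∧ u ≠ c)) :
    Nonempty (G ≃g completeBipartiteGraph (Fin 1) (Fin q)) := by
  classical
  have e0 : Fin 1 ⊕ Fin q ≃ V := Fintype.equivOfCardEq (by simp [hc]; omega)
  obtain ⟨e, he⟩ : ∃ e : Fin 1 ⊕ Fin q ≃ V, e (Sum.inl 0) = c :=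
    ⟨e0.trans (Equiv.swap (e0 (Sum.inl 0)) c), by simp⟩
  have h1 : ∀ x, e x = c ↔ x = Sum.inl 0 := by
    intro x; rw [← he]; exact e.injective.eq_iff
  refine ⟨(RelIso.symm ⟨e, ?_⟩)⟩
  intro a b
  rw [h, ne_eq, ne_eq, h1, h1]
  rcases a with a | a <;> rcases b with b | b <;>
    simp [Subsingleton.elim _ (0 : Fin 1)]

theorem aux_fwd {V : Type} [Fintype V] (G : SimpleGraph V) (k : ℕ) (hk : 1 ≤ k)
    (hq : 1 ≤ G.edgeSet.ncard) (hiso : ∀ v : V, ∃ u : V, G.Adj v u)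
    (f : V ⊕ G.edgeSet → ℕ) (hf : IsKSuperGraceful G k f)
    (ho : ∀ e : G.edgeSet, Odd (f (Sum.inr e))) :
    k = 1 ∧ Nonempty (G ≃g completeBipartiteGraph (Fin 1) (Fin G.edgeSet.ncard)) := by
  classical
  obtain ⟨hinj, hran, hlab⟩ := hf
  have hcE : Fintype.card G.edgeSet = G.edgeSet.ncard := by
    rw [← Nat.card_coe_set_eq, Nat.card_eq_fintype_card]
  set q := G.edgeSet.ncard with hqdef
  set N := k + Fintype.card V + q - 1 with hN
  let g : V → ℕ := fun v => f (Sum.inl v)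
  have hpar : ∀ u v, G.Adj u v → (Odd (g u) ↔ Even (g v)) := by
    intro u v h
    have h1 := ho ⟨s(u, v), (G.mem_edgeSet).mpr h⟩
    rw [hlab u v h] at h1
    change Odd (max (g u) (g v) - min (g u) (g v)) at h1
    rw [Nat.odd_iff] at h1 ⊢
    rw [Nat.even_iff]
    rcases le_total (g u) (g v) with h2 | h2
    · rw [max_eq_right h2, min_eq_left h2] at h1; omega
    · rw [max_eq_left h2, min_eq_right h2] at h1; omega
  have hmem : ∀ x, f x ∈ Set.Icc k N := fun x => hran ▸ Set.mem_range_self x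
  have heven : ∀ n, k ≤ n → n ≤ N → Even n → ∃ v, g v = n := by
    intro n h1 h2 h3
    have : n ∈ Set.range f := by rw [hran]; exact ⟨h1, h2⟩
    obtain ⟨x | x, hx⟩ := this
    · exact ⟨x, hx⟩
    · have := ho x
      rw [hx] at this
      exact absurd h3 (Nat.not_even_iff_odd.mpr this)
  set A := Finset.univ.filter (fun v => Even (g v)) with hA
  set B := Finset.univ.filter (fun v => Odd (g v)) with hB
  have hab : A.card + B.card = Fintype.card V := by
    have := Finset.card_filter_add_card_filter_not (s := (Finset.univ : Finset V))
      (fun v => Even (g v))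
    simp only [Nat.not_even_iff_odd] at this
    simpa using this
  have h1 : B.card + q ≤ ((Finset.Icc k N).filter Odd).card := by
    have : (B.disjSum (Finset.univ : Finset G.edgeSet)).card ≤
        ((Finset.Icc k N).filter Odd).card := by
      apply Finset.card_le_card_of_injOn f
      · intro x hx
        have h2 := hmem x
        simp only [Finset.coe_filter, Finset.mem_Icc, Set.mem_ofPred_eq]
        refine ⟨h2, ?_⟩
        rcases x with x | x
        · simpa [hB] using hx
        · exact ho x
      · exact hinj.injOn
    rwa [Finset.card_disjSum, Finset.card_univ, hcE] at this
  have h2 : ((Finset.Icc k N).filter Even).card ≤ A.card := by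
    refine le_trans (Finset.card_le_card ?_) (Finset.card_image_le (s := A) (f := g))
    intro n hn
    simp only [Finset.mem_filter, Finset.mem_Icc] at hn
    obtain ⟨v, hv⟩ := heven n hn.1.1 hn.1.2 hn.2
    rw [Finset.mem_image]
    exact ⟨v, by simp [hA, hv, hn.2], hv⟩
  choose nb hnb using hiso
  have h3 : A.card ≤ q := by
    rw [← hcE, ← Finset.card_univ]
    apply Finset.card_le_card_of_injOn
      (fun v => (⟨s(v, nb v), (G.mem_edgeSet).mpr (hnb v)⟩ : G.edgeSet))
    · intro x _; simp
    · intro x hx y hy hxy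
      simp only [Subtype.mk.injEq, Sym2.eq_iff] at hxy
      rcases hxy with h | h
      · exact h.1
      · have hx' : Even (g x) := by simpa [hA] using hx
        have hy' : Even (g y) := by simpa [hA] using hy
        have := (hpar _ _ (hnb y).symm).2 hy'
        rw [← h.1] at this
        exact absurd hx' (Nat.not_even_iff_odd.mpr this)
  have h4 := aux_odd_even k N
  have h5 : 1 ≤ B.card := by
    rw [Finset.one_le_card]
    have : Nonempty G.edgeSet := by rw [← Fintype.card_pos_iff]; omega
    obtain ⟨⟨x, hx⟩⟩ := this
    induction x with | _ u v =>
    have h := hpar u v hx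
    by_cases hu : Odd (g u)
    · exact ⟨u, by simp [hB, hu]⟩
    · refine ⟨v, ?_⟩
      have := mt h.2 hu
      rw [Nat.not_even_iff_odd] at this
      simp [hB, this]
  have hb : B.card = 1 := by omega
  have ha : A.card = q := by omega
  obtain ⟨c, hc⟩ := Finset.card_eq_one.1 hb
  have hodd : ∀ v, Odd (g v) ↔ v = c := by
    intro v
    have : v ∈ B ↔ v ∈ ({c} : Finset V) := by rw [hc]
    simpa [hB] using this
  have hadj : ∀ u v, G.Adj u v ↔ (u = c ∧ v ≠ c) ∨ (v = c ∧ u ≠ c) := by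
    have key : ∀ v, v ≠ c → G.Adj v c := by
      intro v hv
      have h := hpar _ _ (hnb v).symm
      rw [ne_eq, ← hodd, Nat.not_odd_iff_even] at hv
      have := (hodd _).1 (h.2 hv)
      have h' := hnb v
      rwa [this] at h'
    intro u v
    constructor
    · intro h
      have h' := hpar u v h
      rw [← Nat.not_odd_iff_even, hodd, hodd] at h'
      tauto
    · rintro (⟨rfl, h⟩ | ⟨rfl, h⟩)
      · exact (key v h).symm
      · exact key u h
  refine ⟨?_, aux_star G q c (by omega) hadj⟩
  have hcm := hmem (Sum.inl c)
  have hco : Odd (g c) := (hodd c).2 rfl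
  obtain ⟨hc1, hc2⟩ := hcm
  change k ≤ g c at hc1
  change g c ≤ N at hc2
  have hv : ∃ v, Even (g v) ∧ (g v = g c + 1 ∨ g v + 1 = g c) := by
    by_cases hlt : g c + 1 ≤ N
    · obtain ⟨v, hv⟩ := heven (g c + 1) (by omega) hlt hco.add_one
      exact ⟨v, hv ▸ hco.add_one, Or.inl hv⟩
    · have : Even (g c - 1) := by
        rw [Nat.even_iff]; rw [Nat.odd_iff] at hco; omega
      obtain ⟨v, hv⟩ := heven (g c - 1) (by omega) (by omega) this
      exact ⟨v, hv ▸ this, Or.inr (by omega)⟩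
  obtain ⟨v, hve, hv⟩ := hv
  have hvc : v ≠ c := by
    rw [ne_eq, ← hodd, Nat.not_odd_iff_even]; exact hve
  have hA1 : G.Adj v c := (hadj v c).2 (Or.inr ⟨rfl, hvc⟩)
  have hl := hlab v c hA1
  change _ = max (g v) (g c) - min (g v) (g c) at hl
  have hge := (hmem (Sum.inr ⟨s(v, c), (G.mem_edgeSet).mpr hA1⟩)).1
  rw [hl] at hge
  omega

theorem aux_bwd {V : Type} [Fintype V] (G : SimpleGraph V) (q : ℕ)
    (hqq : G.edgeSet.ncard = q)
    (e : G ≃g completeBipartiteGraph (Fin 1) (Fin q)) :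
    ∃ f : V ⊕ G.edgeSet → ℕ, IsKSuperGraceful G 1 f ∧
      ∀ e : G.edgeSet, Odd (f (Sum.inr e)) := by
  classical
  let t : Fin 1 ⊕ Fin q → ℕ := Sum.elim (fun _ => 2 * q + 1) (fun i => 2 * i.val + 2)
  let g : V → ℕ := fun v => t (e v)
  let d : Sym2 V → ℕ := Sym2.lift ⟨fun u v => max (g u) (g v) - min (g u) (g v), by
    intro u v; simp only [max_comm, min_comm]⟩
  have hcE : Fintype.card G.edgeSet = q := by
    rw [← hqq, ← Nat.card_coe_set_eq, Nat.card_eq_fintype_card]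
  have hcV : Fintype.card V = q + 1 := by
    rw [Fintype.card_congr e.toEquiv]; simp; omega
  have hedge : ∀ x : G.edgeSet, ∃ i : Fin q,
      x.1 = s(e.symm (Sum.inl 0), e.symm (Sum.inr i)) := by
    rintro ⟨x, hx⟩
    induction x with | _ u v =>
    have h : G.Adj u v := hx
    rw [← e.map_adj_iff] at h
    obtain ⟨a, rfl⟩ := e.symm.surjective u
    obtain ⟨b, rfl⟩ := e.symm.surjective v
    rcases a with a | a <;> rcases b with b | b <;> simp at h
    · exact ⟨b, by simp only [Subsingleton.elim a 0]⟩
    · exact ⟨a, by simp only [Subsingleton.elim b 0]; exact Sym2.eq_swap⟩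
  have hd : ∀ i : Fin q, d s(e.symm (Sum.inl 0), e.symm (Sum.inr i)) = 2 * (q - i.val) - 1 := by
    intro i
    have : d s(e.symm (Sum.inl 0), e.symm (Sum.inr i)) =
      max (t (e (e.symm (Sum.inl 0)))) (t (e (e.symm (Sum.inr i)))) -
      min (t (e (e.symm (Sum.inl 0)))) (t (e (e.symm (Sum.inr i)))) := rfl
    rw [this]
    simp only [RelIso.apply_symm_apply, t, Sum.elim_inl, Sum.elim_inr]
    have := i.2
    omega
  have hinj : Function.Injective (Sum.elim g (fun x : G.edgeSet => d x.1)) := by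
    have hv : ∀ (v : V) (x : G.edgeSet), g v ≠ d x.1 := by
      intro v x
      obtain ⟨i, hi⟩ := hedge x
      rw [hi, hd]
      have := i.2
      change t (e v) ≠ _
      rcases e v with a | a
      · simp only [t, Sum.elim_inl]; omega
      · simp only [t, Sum.elim_inr]; omega
    rintro (u | x) (v | y) h
    · simp only [Sum.elim_inl] at h
      congr 1
      apply e.injective
      change t (e u) = t (e v) at h
      generalize e u = a at h ⊢
      generalize e v = b at h ⊢
      rcases a with a | a <;> rcases b with b | b <;>
        simp only [t, Sum.elim_inl, Sum.elim_inr] at h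
      · rw [Subsingleton.elim a b]
      · omega
      · omega
      · congr 1; apply Fin.ext; omega
    · exact absurd h (hv u y)
    · exact absurd h.symm (hv v x)
    · simp only [Sum.elim_inr] at h
      congr 1
      apply Subtype.ext
      obtain ⟨i, hi⟩ := hedge x
      obtain ⟨j, hj⟩ := hedge y
      rw [hi, hj, hd, hd] at h
      have : i = j := by apply Fin.ext; omega
      rw [hi, hj, this]
  refine ⟨Sum.elim g (fun x => d x.1), ⟨hinj, ?_, fun u v h => rfl⟩, ?_⟩
  · rw [hqq, hcV]
    have : Finset.univ.image (Sum.elim g (fun x : G.edgeSet => d x.1)) =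
        Finset.Icc 1 (1 + (q + 1) + q - 1) := by
      apply Finset.eq_of_subset_of_card_le
      · intro n hn
        rw [Finset.mem_image] at hn
        obtain ⟨v | x, _, rfl⟩ := hn
        · rw [Finset.mem_Icc]
          change 1 ≤ t (e v) ∧ t (e v) ≤ _
          rcases e v with a | a
          · simp only [t, Sum.elim_inl]; omega
          · simp only [t, Sum.elim_inr]; omega
        · obtain ⟨i, hi⟩ := hedge x
          rw [Finset.mem_Icc, Sum.elim_inr, hi, hd]
          omega
      · rw [Finset.card_image_of_injective _ hinj, Finset.card_univ, Fintype.card_sum, hcE, hcV,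
          Nat.card_Icc]
        omega
    rw [← Finset.coe_Icc, ← this]
    simp
  · intro x
    obtain ⟨i, hi⟩ := hedge x
    rw [Sum.elim_inr, hi, hd, Nat.odd_iff]
    omega

/-- `G` is `k`-super graceful with all odd edge labels iff `k = 1` and `G` is
isomorphic to the star `K(1, q)`. -/
theorem stmt_17 {V : Type} [Fintype V] (G : SimpleGraph V) (k : ℕ) (hk : 1 ≤ k)
    (hq : 1 ≤ G.edgeSet.ncard) (hiso : ∀ v : V, ∃ u : V, G.Adj v u) :
    (∃ f : V ⊕ G.edgeSet → ℕ, IsKSuperGraceful G k f ∧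
      ∀ e : G.edgeSet, Odd (f (Sum.inr e))) ↔
    (k = 1 ∧
      Nonempty (G ≃g completeBipartiteGraph (Fin 1) (Fin G.edgeSet.ncard))) := by
  constructor
  · rintro ⟨f, hf, ho⟩
    exact aux_fwd G k hk hq hiso f hf ho
  · rintro ⟨rfl, ⟨e⟩⟩
    exact aux_bwd G _ rfl e
end

section
/- For every integer n ≥ 2 and every integer k ≥ 1, the complete bipartite graph K(2, n) is k-super graceful if and only if k = 1, k = 2, or k = n. -/
/-- Block structure of period `2a`. -/
lemma blocks2 (P : ℤ → Prop) (a b N : ℤ) (ha : 0 < a)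
    (hN : ∀ m, N < m → ¬ P m)
    (h1 : ∀ m, b < m → m ≤ N → (P m ∨ P (m + a)))
    (h2 : ∀ m, b < m → P m → ¬ P (m + a)) (t : ℤ) (ht : t ≤ N) :
    ∃ M, t ≤ M ∧ M < t + 2 * a ∧
      (∀ i, 0 ≤ i → i < 2 * a → b < M - i → (P (M - i) ↔ i < a)) ∧
      (∀ i, 0 ≤ i → i < 2 * a → b < M - 2 * a - i → (P (M - 2 * a - i) ↔ i < a)) := by
  have step : ∀ M, M ≤ N → (∀ i, 0 ≤ i → i < 2 * a → b < M - i → (P (M - i) ↔ i < a)) →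
      (∀ i, 0 ≤ i → i < 2 * a → b < M - 2 * a - i → (P (M - 2 * a - i) ↔ i < a)) := by
    intro M hM hB
    have fst_blk : ∀ i, 0 ≤ i → i < a → b < M - 2 * a - i → P (M - 2 * a - i) := by
      intro i hi hia hb
      have := h1 (M - 2 * a - i) hb (by omega)
      have e := hB (a + i) (by omega) (by omega) (by omega)
      rw [show M - (a + i) = M - 2 * a - i + a by ring] at e
      have : ¬ P (M - 2 * a - i + a) := fun h => by have := e.1 h; omega
      tauto
    intro i hi hi2 hb
    constructor
    · intro hp
      by_contra hia
      have q := fst_blk (i - a) (by omega) (by omega) (by omega)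
      rw [show M - 2 * a - (i - a) = M - 2 * a - i + a by ring] at q
      exact h2 _ hb hp q
    · intro hia
      exact fst_blk i hi hia hb
  have base : ∀ i, 0 ≤ i → i < 2 * a → b < N - i → (P (N - i) ↔ i < a) := by
    have fst_blk : ∀ i, 0 ≤ i → i < a → b < N - i → P (N - i) := by
      intro i hi hia hb
      exact (h1 (N - i) hb (by omega)).resolve_right (hN _ (by omega))
    intro i hi hi2 hb
    constructor
    · intro hp
      by_contra hia
      have q := fst_blk (i - a) (by omega) (by omega) (by omega)
      rw [show N - (i - a) = N - i + a by ring] at q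
      exact h2 _ hb hp q
    · intro hia
      exact fst_blk i hi hia hb
  have main : ∀ s : ℕ, ∀ M, M ≤ N → t ≤ M → (M - t).toNat ≤ s →
      (∀ i, 0 ≤ i → i < 2 * a → b < M - i → (P (M - i) ↔ i < a)) →
      ∃ M, t ≤ M ∧ M < t + 2 * a ∧
      (∀ i, 0 ≤ i → i < 2 * a → b < M - i → (P (M - i) ↔ i < a)) ∧
      (∀ i, 0 ≤ i → i < 2 * a → b < M - 2 * a - i → (P (M - 2 * a - i) ↔ i < a)) := by
    intro s
    induction s with
    | zero =>
      intro M hM ht hs hB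
      exact ⟨M, ht, by omega, hB, step M hM hB⟩
    | succ s ih =>
      intro M hM ht hs hB
      by_cases h : M < t + 2 * a
      · exact ⟨M, ht, h, hB, step M hM hB⟩
      · exact ih (M - 2 * a) (by omega) (by omega) (by omega) (step M hM hB)
  exact main _ N le_rfl ht le_rfl base

/-- Block structure of period `3a`. -/
lemma blocks3 (P : ℤ → Prop) (a b N : ℤ) (ha : 0 < a)
    (hN : ∀ m, N < m → ¬ P m)
    (h1 : ∀ m, b < m → m ≤ N → (P m ∨ P (m + a) ∨ P (m + 2 * a)))
    (h2 : ∀ m, b < m → P m → ¬ P (m + a))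
    (h3 : ∀ m, b < m → P m → ¬ P (m + 2 * a)) (t : ℤ) (ht : t ≤ N) :
    ∃ M, t ≤ M ∧ M < t + 3 * a ∧
      (∀ i, 0 ≤ i → i < 3 * a → b < M - i → (P (M - i) ↔ i < a)) ∧
      (∀ i, 0 ≤ i → i < 3 * a → b < M - 3 * a - i → (P (M - 3 * a - i) ↔ i < a)) := by
  have fill : ∀ M, (∀ i, 0 ≤ i → i < a → b < M - i → P (M - i)) →
      (∀ i, 0 ≤ i → i < 3 * a → b < M - i → (P (M - i) ↔ i < a)) := by
    intro M fst_blk i hi hi2 hb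
    constructor
    · intro hp
      by_contra hia
      by_cases hi3 : i < 2 * a
      · have q := fst_blk (i - a) (by omega) (by omega) (by omega)
        rw [show M - (i - a) = M - i + a by ring] at q
        exact h2 _ hb hp q
      · have q := fst_blk (i - 2 * a) (by omega) (by omega) (by omega)
        rw [show M - (i - 2 * a) = M - i + 2 * a by ring] at q
        exact h3 _ hb hp q
    · intro hia
      exact fst_blk i hi hia hb
  have step : ∀ M, M ≤ N → (∀ i, 0 ≤ i → i < 3 * a → b < M - i → (P (M - i) ↔ i < a)) →
      (∀ i, 0 ≤ i → i < 3 * a → b < M - 3 * a - i → (P (M - 3 * a - i) ↔ i < a)) := by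
    intro M hM hB
    apply fill
    intro i hi hia hb
    have := h1 (M - 3 * a - i) hb (by omega)
    have e := hB (2 * a + i) (by omega) (by omega) (by omega)
    rw [show M - (2 * a + i) = M - 3 * a - i + a by ring] at e
    have e' := hB (a + i) (by omega) (by omega) (by omega)
    rw [show M - (a + i) = M - 3 * a - i + 2 * a by ring] at e'
    have : ¬ P (M - 3 * a - i + a) := fun h => by have := e.1 h; omega
    have : ¬ P (M - 3 * a - i + 2 * a) := fun h => by have := e'.1 h; omega
    tauto
  have base : ∀ i, 0 ≤ i → i < 3 * a → b < N - i → (P (N - i) ↔ i < a) := by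
    apply fill
    intro i hi hia hb
    have q1 := hN (N - i + a) (by omega)
    have q2 := hN (N - i + 2 * a) (by omega)
    have := h1 (N - i) hb (by omega)
    tauto
  have main : ∀ s : ℕ, ∀ M, M ≤ N → t ≤ M → (M - t).toNat ≤ s →
      (∀ i, 0 ≤ i → i < 3 * a → b < M - i → (P (M - i) ↔ i < a)) →
      ∃ M, t ≤ M ∧ M < t + 3 * a ∧
      (∀ i, 0 ≤ i → i < 3 * a → b < M - i → (P (M - i) ↔ i < a)) ∧
      (∀ i, 0 ≤ i → i < 3 * a → b < M - 3 * a - i → (P (M - 3 * a - i) ↔ i < a)) := by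
    intro s
    induction s with
    | zero =>
      intro M hM ht hs hB
      exact ⟨M, ht, by omega, hB, step M hM hB⟩
    | succ s ih =>
      intro M hM ht hs hB
      by_cases h : M < t + 3 * a
      · exact ⟨M, ht, h, hB, step M hM hB⟩
      · exact ih (M - 3 * a) (by omega) (by omega) (by omega) (step M hM hB)
  exact main _ N le_rfl ht le_rfl base

/-- Combinatorial core: `P` is the set of labels on the part of size `n`. -/
lemma core (P : ℤ → Prop) (a b k N : ℤ) (hk : 3 ≤ k) (hab : a < b)
    (hak : k ≤ a) (hbN : b ≤ N) (hNk : k + 2 ≤ N)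
    (cov : ∀ m, k ≤ m → m ≤ N → m = a ∨ m = b ∨ P m ∨ P (m + a) ∨ P (m + b) ∨
      P (a - m) ∨ P (b - m))
    (H0 : ∀ x, P x → k ≤ x ∧ x ≤ N ∧ x ≠ a ∧ x ≠ b ∧ k ≤ ((x - a).natAbs : ℤ) ∧
      k ≤ ((x - b).natAbs : ℤ) ∧ ((x - a).natAbs : ℤ) ≠ a ∧ ((x - a).natAbs : ℤ) ≠ b ∧
      ((x - b).natAbs : ℤ) ≠ a ∧ ((x - b).natAbs : ℤ) ≠ b)
    (H1 : ∀ x y, P x → P y → x ≠ ((y - a).natAbs : ℤ) ∧ x ≠ ((y - b).natAbs : ℤ) ∧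
      (x - a).natAbs ≠ (y - b).natAbs ∧ ((x - b).natAbs = (y - b).natAbs → x = y)) :
    N = 4 * k + 1 := by
  have hlt : ∀ x, x < k → ¬ P x := fun x h hx => by have := H0 x hx; omega
  have hgt : ∀ x, N < x → ¬ P x := fun x h hx => by have := H0 x hx; omega
  have na : ∀ x, a - k < x → x < a + k → ¬ P x := fun x h h' hx => by have := H0 x hx; omega
  have nb : ∀ x, b - k < x → x < b + k → ¬ P x := fun x h h' hx => by have := H0 x hx; omega
  -- edges are not vertices
  have ea : ∀ x, P x → ¬ P (x - a) := fun x hx hy => by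
    have := (H1 _ _ hy hx).1; have := H0 _ hy; omega
  have eb : ∀ x, P x → ¬ P (x - b) := fun x hx hy => by
    have := (H1 _ _ hy hx).2.1; have := H0 _ hy; omega
  have eab : ∀ x y, P x → P y → x - a ≠ y - b := fun x y hx hy h => by
    have := (H1 _ _ hx hy).2.2.1; omega
  -- `b ≠ N`
  have hbN' : b < N := by
    rcases lt_or_eq_of_le hbN with h | h
    · exact h
    exfalso
    have key : ∀ m, N - 2 ≤ m → m < N → m ≠ a → False := by
      intro m h1 h2 h3
      rcases cov m (by omega) (by omega) with c | c | c | c | c | c | c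
      · omega
      · omega
      · exact nb _ (by omega) (by omega) c
      · exact hgt _ (by omega) c
      · exact hgt _ (by omega) c
      · exact hlt _ (by omega) c
      · exact hlt _ (by omega) c
    by_cases h3 : N - 1 = a
    · exact key (N - 2) (by omega) (by omega) (by omega)
    · exact key (N - 1) (by omega) (by omega) h3
  -- cover above b
  have cb : ∀ m, b < m → m ≤ N → P m ∨ P (m + a) ∨ P (m + b) := by
    intro m h1 h2
    rcases cov m (by omega) (by omega) with c | c | c | c | c | c | c
    · omega
    · omega
    · tauto
    · tauto
    · tauto
    · exact absurd c (hlt _ (by omega))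
    · exact absurd c (hlt _ (by omega))
  have top : ∀ m, b < m → N - a < m → m ≤ N → P m := by
    intro m h1 h2 h3
    have := cb m h1 h3
    have := hgt (m + a) (by omega)
    have := hgt (m + b) (by omega)
    tauto
  have hb1 : b < N - a := by
    by_contra h
    exact nb (b + 1) (by omega) (by omega) (top _ (by omega) (by omega) (by omega))
  have top' : ∀ m, N - a < m → m ≤ N → P m := fun m h1 h2 => top m (by omega) h1 h2
  have hb2 : b ≤ N - 2 * a := by
    by_contra h
    have := H0 (b + a) (top' _ (by omega) (by omega))
    omega
  have hb3 : 2 * a ≤ b := by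
    by_contra h
    exact eab (N - (b - a)) N (top' _ (by omega) (by omega)) (top' _ (by omega) (by omega))
      (by omega)
  -- second block is not in P
  have sec : ∀ m, N - 2 * a < m → m ≤ N - a → ¬ P m := by
    intro m h1 h2
    have := ea (m + a) (top' _ (by omega) (by omega))
    rwa [show m + a - a = m by ring] at this
  have nab : ¬ P (a + b) := fun h => by have := H0 _ h; omega
  have n2b : ¬ P (2 * b) := fun h => by have := H0 _ h; omega
  have n2a : ¬ P (2 * a) := fun h => by have := H0 _ h; omega
  -- cover of b - 1
  have cb1 : P (b - 1 + a) ∨ P (2 * b - 1) := by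
    rcases cov (b - 1) (by omega) (by omega) with c | c | c | c | c | c | c
    · omega
    · omega
    · exact absurd c (nb _ (by omega) (by omega))
    · tauto
    · right; rwa [show 2 * b - 1 = b - 1 + b by ring]
    · exact absurd c (hlt _ (by omega))
    · exact absurd c (hlt _ (by omega))
  by_cases c1 : b = 2 * a
  · -- Case b = 2a
    exfalso
    subst c1
    obtain ⟨M, hM1, hM2, B1, B2⟩ := blocks3 P a (2 * a) N (by omega) hgt cb
      (fun m _ h h' => by
        have := ea _ h'; rw [show m + a - a = m by ring] at this; exact this h)
      (fun m _ h h' => by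
        have := eb _ h'; rw [show m + 2 * a - 2 * a = m by ring] at this; exact this h)
      (4 * a) (by omega)
    have val : ∀ m, 2 * a < m → m ≤ M → M - 3 * a < m → (P m ↔ M - m < a) := by
      intro m h1 h2 h3
      have := B1 (M - m) (by omega) (by omega) (by omega)
      rwa [show M - (M - m) = m by ring] at this
    have val2 : ∀ m, 2 * a < m → m ≤ M - 3 * a → M - 6 * a < m →
        (P m ↔ M - 3 * a - m < a) := by
      intro m h1 h2 h3
      have := B2 (M - 3 * a - m) (by omega) (by omega) (by omega)
      rwa [show M - 3 * a - (M - 3 * a - m) = m by ring] at this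
    have r4 := val (4 * a) (by omega) (by omega) (by omega)
    have n4 : ¬ P (4 * a) := by rwa [show 4 * a = 2 * (2 * a) by ring]
    have n3 : ¬ P (3 * a) := by rwa [show 3 * a = a + 2 * a by ring]
    have hr1 : a ≤ M - 4 * a := by
      by_contra h; exact n4 (r4.2 (by omega))
    have hr2 : M - 4 * a < 2 * a := by
      by_contra h
      exact n3 ((val2 (3 * a) (by omega) (by omega) (by omega)).2 (by omega))
    by_cases hr : M - 4 * a = a
    · rcases cb1 with c | c
      · have := (val (2 * a - 1 + a) (by omega) (by omega) (by omega)).1 c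
        omega
      · have := (val (2 * (2 * a) - 1) (by omega) (by omega) (by omega)).1 c
        omega
    · exact nb (2 * a + 1) (by omega) (by omega)
        ((val2 (2 * a + 1) (by omega) (by omega) (by omega)).2 (by omega))
  by_cases c2 : b = N - 2 * a
  · have low : ∀ m, a < m → m ≤ 2 * a → ¬ P m := by
      intro m h1 h2
      have := eb (m + b) (top' _ (by omega) (by omega))
      rwa [show m + b - b = m by ring] at this
    have hb4 : b = 2 * a + 1 := by
      by_contra h
      rcases cb1 with c | c
      · exact sec _ (by omega) (by omega) c
      · exact hgt _ (by omega) c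
    have : a = k := by
      by_contra h
      rcases cov (a - 1) (by omega) (by omega) with c | c | c | c | c | c | c
      · omega
      · omega
      · exact na _ (by omega) (by omega) c
      · exact low _ (by omega) (by omega) c
      · exact sec _ (by omega) (by omega) c
      · exact hlt _ (by omega) c
      · exact low _ (by omega) (by omega) c
    omega
  exfalso
  have hP2 : P (N - 2 * a) := by
    rcases cb (N - 2 * a) (by omega) (by omega) with c | c | c
    · exact c
    · exact absurd c (sec _ (by omega) (by omega))
    · exact absurd c (hgt _ (by omega))
  rcases lt_trichotomy N (2 * b) with hM | hM | hM
  · obtain ⟨M, hM1, hM2, B1, B2⟩ := blocks2 P a b N (by omega) hgt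
      (fun m h1 h2 => by
        have := cb m h1 h2
        have := hgt (m + b) (by omega)
        tauto)
      (fun m _ h h' => by
        have := ea _ h'; rw [show m + a - a = m by ring] at this; exact this h)
      (a + b) (by omega)
    have val : ∀ m, b < m → m ≤ M → M - 2 * a < m → (P m ↔ M - m < a) := by
      intro m h1 h2 h3
      have := B1 (M - m) (by omega) (by omega) (by omega)
      rwa [show M - (M - m) = m by ring] at this
    have val2 : ∀ m, b < m → m ≤ M - 2 * a → M - 4 * a < m →
        (P m ↔ M - 2 * a - m < a) := by
      intro m h1 h2 h3
      have := B2 (M - 2 * a - m) (by omega) (by omega) (by omega)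
      rwa [show M - 2 * a - (M - 2 * a - m) = m by ring] at this
    have hr1 : a ≤ M - (a + b) := by
      by_contra h
      exact nab ((val _ (by omega) (by omega) (by omega)).2 (by omega))
    have nb1 := nb (b + 1) (by omega) (by omega)
    have hr2 : M - (a + b) = a := by
      by_contra h
      exact nb1 ((val2 (b + 1) (by omega) (by omega) (by omega)).2 (by omega))
    have n1 : ¬ P (b - 1 + a) := fun c => by
      have := (val (b - 1 + a) (by omega) (by omega) (by omega)).1 c
      omega
    have p1 : P (a + b + 1) := (val (a + b + 1) (by omega) (by omega) (by omega)).2 (by omega)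
    have p2 : P (2 * b - 1) := by tauto
    have hN : N = 2 * b - 1 := by have := H0 _ p2; omega
    rcases cov (b - a - 1) (by omega) (by omega) with c | c | c | c | c | c | c
    · omega
    · omega
    · have := (H1 _ _ c p1).2.2.2; omega
    · exact nb _ (by omega) (by omega) c
    · exact sec _ (by omega) (by omega) c
    · exact hlt _ (by omega) c
    · exact na _ (by omega) (by omega) c
  · exact n2b (hM ▸ top' N (by omega) le_rfl)
  · have hMa : a ≤ N - 2 * b := by
      by_contra h
      exact n2b (top' _ (by omega) (by omega))
    have f1 : ∀ m, N - b - a < m → m ≤ N - b → ¬ P m := by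
      intro m h1 h2
      have := eb (m + b) (top' _ (by omega) (by omega))
      rwa [show m + b - b = m by ring] at this
    have f2 : ∀ m, N - b - a < m → m ≤ N - b → ¬ P (m + a) := fun m h1 h2 h =>
      eab _ _ h (top' (m + b) (by omega) (by omega)) (by omega)
    by_cases hMe : N - 2 * b = a
    · rcases cb1 with c | c
      · exact f1 _ (by omega) (by omega) c
      · exact sec _ (by omega) (by omega) c
    · rcases cb (N - b - a) (by omega) (by omega) with c | c | c
      · exact eab _ _ c hP2 (by omega)
      · exact f1 _ (by omega) (by omega) c
      · exact sec _ (by omega) (by omega) c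

/-- The edges of `K(2, n)`. -/
def edgeMap (n : ℕ) (p : Fin 2 × Fin n) :
    (completeBipartiteGraph (Fin 2) (Fin n)).edgeSet :=
  ⟨s(Sum.inl p.1, Sum.inr p.2), by simp [SimpleGraph.mem_edgeSet]⟩

lemma edgeMap_bij (n : ℕ) : Function.Bijective (edgeMap n) := by
  constructor
  · rintro ⟨i, j⟩ ⟨i', j'⟩ h
    simpa [edgeMap, Subtype.ext_iff] using h
  · rintro ⟨e, he⟩
    induction e using Sym2.ind with
    | _ u v =>
      rcases u with u | u <;> rcases v with v | v
      · simp [SimpleGraph.mem_edgeSet] at he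
      · exact ⟨(u, v), rfl⟩
      · exact ⟨(v, u), Subtype.ext Sym2.eq_swap⟩
      · simp [SimpleGraph.mem_edgeSet] at he

lemma edge_ncard (n : ℕ) : (completeBipartiteGraph (Fin 2) (Fin n)).edgeSet.ncard = 2 * n := by
  rw [← Nat.card_coe_set_eq, ← Nat.card_congr (Equiv.ofBijective _ (edgeMap_bij n))]
  simp

/-- Sufficient criterion for a labeling. -/
lemma build (n k : ℕ) (c : Fin 2 → ℕ) (x : Fin n → ℕ)
    (hin : (∀ i, c i ∈ Set.Icc k (k + 3 * n + 1)) ∧ (∀ j, x j ∈ Set.Icc k (k + 3 * n + 1)) ∧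
      ∀ i j, max (c i) (x j) - min (c i) (x j) ∈ Set.Icc k (k + 3 * n + 1))
    (hsurj : ∀ m ∈ Set.Icc k (k + 3 * n + 1), (∃ i, c i = m) ∨ (∃ j, x j = m) ∨
      ∃ i j, max (c i) (x j) - min (c i) (x j) = m) :
    ∃ f : (Fin 2 ⊕ Fin n) ⊕ (completeBipartiteGraph (Fin 2) (Fin n)).edgeSet → ℕ,
      IsKSuperGraceful (completeBipartiteGraph (Fin 2) (Fin n)) k f := by
  classical
  let g : Fin 2 ⊕ Fin n → ℕ := Sum.elim c x
  let h : Sym2 (Fin 2 ⊕ Fin n) → ℕ :=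
    Sym2.lift ⟨fun u v => max (g u) (g v) - min (g u) (g v), fun u v => by
      simp only [max_comm, min_comm]⟩
  let f : (Fin 2 ⊕ Fin n) ⊕ (completeBipartiteGraph (Fin 2) (Fin n)).edgeSet → ℕ :=
    Sum.elim g (fun e => h e.1)
  have hr : Set.range f = Set.Icc k (k + 3 * n + 1) := by
    ext m
    constructor
    · rintro ⟨(( i | j) | e), rfl⟩
      · exact hin.1 i
      · exact hin.2.1 j
      · obtain ⟨⟨i, j⟩, rfl⟩ := (edgeMap_bij n).2 e
        exact hin.2.2 i j
    · intro hm
      rcases hsurj m hm with ⟨i, hi⟩ | ⟨j, hj⟩ | ⟨i, j, hij⟩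
      · exact ⟨Sum.inl (Sum.inl i), hi⟩
      · exact ⟨Sum.inl (Sum.inr j), hj⟩
      · exact ⟨Sum.inr (edgeMap n (i, j)), hij⟩
  refine ⟨f, ?_, ?_, ?_⟩
  · have hc : Fintype.card ((Fin 2 ⊕ Fin n) ⊕
        (completeBipartiteGraph (Fin 2) (Fin n)).edgeSet) = 3 * n + 2 := by
      have := edge_ncard n
      rw [← Nat.card_coe_set_eq, Nat.card_eq_fintype_card] at this
      rw [Fintype.card_sum, this]
      simp; omega
    have him : Finset.univ.image f = Finset.Icc k (k + 3 * n + 1) := by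
      ext m
      have := Set.ext_iff.1 hr m
      simpa using this
    have := congrArg Finset.card him
    have hcard : (Finset.univ.image f).card = (Finset.univ : Finset ((Fin 2 ⊕ Fin n) ⊕
        (completeBipartiteGraph (Fin 2) (Fin n)).edgeSet)).card := by
      rw [this, Finset.card_univ, hc, Nat.card_Icc]; omega
    exact fun u v huv => Finset.card_image_iff.1 hcard (by simp) (by simp) huv
  · rw [hr, edge_ncard]
    congr 1
    simp; omega
  · intro u v _
    rfl

lemma necessity (n k : ℕ) (hk : 3 ≤ k)
    (f : (Fin 2 ⊕ Fin n) ⊕ (completeBipartiteGraph (Fin 2) (Fin n)).edgeSet → ℕ)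
    (hn : 2 ≤ n)
    (hf : IsKSuperGraceful (completeBipartiteGraph (Fin 2) (Fin n)) k f) : k = n := by
  obtain ⟨inj, ran, lab⟩ := hf
  rw [edge_ncard] at ran
  have hS : k + Fintype.card (Fin 2 ⊕ Fin n) + 2 * n - 1 = k + 3 * n + 1 := by
    simp; omega
  rw [hS] at ran
  have mem : ∀ u, k ≤ f u ∧ f u ≤ k + 3 * n + 1 := fun u => by
    have : f u ∈ Set.range f := ⟨u, rfl⟩
    rw [ran] at this; exact this
  have main : ∀ s t : Fin 2, (∀ i, i = s ∨ i = t) → s ≠ t →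
      f (Sum.inl (Sum.inl s)) < f (Sum.inl (Sum.inl t)) → k = n := by
    intro s t hst hne hlt
    have hE : ∀ i j, (f (Sum.inr (edgeMap n (i, j))) : ℤ) =
        (((f (Sum.inl (Sum.inr j)) : ℤ) - f (Sum.inl (Sum.inl i))).natAbs : ℤ) := by
      intro i j
      have := lab (Sum.inl i) (Sum.inr j) (by simp)
      change f (Sum.inr (edgeMap n (i, j))) = _ at this
      omega
    have key := core (fun m => ∃ j, (f (Sum.inl (Sum.inr j)) : ℤ) = m)
      (f (Sum.inl (Sum.inl s))) (f (Sum.inl (Sum.inl t))) k (k + 3 * n + 1)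
      (by omega) (by omega) (by have := mem (Sum.inl (Sum.inl s)); omega)
      (by have := mem (Sum.inl (Sum.inl t)); omega) (by omega) ?_ ?_ ?_
    · omega
    · intro m h1 h2
      have : m.toNat ∈ Set.range f := by rw [ran]; constructor <;> omega
      obtain ⟨u, hu⟩ := this
      rcases u with (i | j) | e
      · rcases hst i with rfl | rfl
        · left; omega
        · right; left; omega
      · right; right; left; exact ⟨j, by omega⟩
      · obtain ⟨⟨i, j⟩, rfl⟩ := (edgeMap_bij n).2 e
        have h := hE i j
        rcases hst i with rfl | rfl
        · by_cases hc : (f (Sum.inl (Sum.inl i)) : ℤ) ≤ f (Sum.inl (Sum.inr j))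
          · right; right; right; left; exact ⟨j, by omega⟩
          · right; right; right; right; right; left; exact ⟨j, by omega⟩
        · by_cases hc : (f (Sum.inl (Sum.inl i)) : ℤ) ≤ f (Sum.inl (Sum.inr j))
          · right; right; right; right; left; exact ⟨j, by omega⟩
          · right; right; right; right; right; right; exact ⟨j, by omega⟩
    · rintro x ⟨j, rfl⟩
      have m0 := mem (Sum.inl (Sum.inr j))
      have m1 := mem (Sum.inr (edgeMap n (s, j)))
      have m2 := mem (Sum.inr (edgeMap n (t, j)))
      rw [← hE s j, ← hE t j]
      have i1 := inj.ne (show Sum.inl (Sum.inr j) ≠ Sum.inl (Sum.inl s) by simp)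
      have i2 := inj.ne (show Sum.inl (Sum.inr j) ≠ Sum.inl (Sum.inl t) by simp)
      have i3 := inj.ne (show Sum.inr (edgeMap n (s, j)) ≠ Sum.inl (Sum.inl s) by simp)
      have i4 := inj.ne (show Sum.inr (edgeMap n (s, j)) ≠ Sum.inl (Sum.inl t) by simp)
      have i5 := inj.ne (show Sum.inr (edgeMap n (t, j)) ≠ Sum.inl (Sum.inl s) by simp)
      have i6 := inj.ne (show Sum.inr (edgeMap n (t, j)) ≠ Sum.inl (Sum.inl t) by simp)
      omega
    · rintro x y ⟨j, rfl⟩ ⟨l, rfl⟩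
      have i1 := inj.ne (show Sum.inl (Sum.inr j) ≠ Sum.inr (edgeMap n (s, l)) by simp)
      have i2 := inj.ne (show Sum.inl (Sum.inr j) ≠ Sum.inr (edgeMap n (t, l)) by simp)
      have i3 := inj.ne (show (Sum.inr (edgeMap n (s, j)) : (Fin 2 ⊕ Fin n) ⊕ _) ≠
          Sum.inr (edgeMap n (t, l)) from fun h => by
        have := (edgeMap_bij n).1 (Sum.inr_injective h)
        exact hne (Prod.ext_iff.1 this).1)
      have h1 := hE s j
      have h2 := hE t l
      have h3 := hE s l
      have h4 := hE t j
      refine ⟨by omega, by omega, by omega, fun h => ?_⟩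
      have : f (Sum.inr (edgeMap n (t, j))) = f (Sum.inr (edgeMap n (t, l))) := by omega
      have := (edgeMap_bij n).1 (Sum.inr_injective (inj this))
      have : j = l := (Prod.ext_iff.1 this).2
      rw [this]
  rcases lt_trichotomy (f (Sum.inl (Sum.inl 0))) (f (Sum.inl (Sum.inl 1))) with h | h | h
  · exact main 0 1 (by decide) (by decide) h
  · have := inj h; simp at this
  · exact main 1 0 (by decide) (by decide) h

/-- For `n ≥ 2`, the complete bipartite graph `K(2, n)` is `k`-super graceful
iff `k = 1`, `k = 2`, or `k = n`. -/
theorem stmt_18 (n k : ℕ) (hn : 2 ≤ n) (hk : 1 ≤ k) :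
    (∃ f : (Fin 2 ⊕ Fin n) ⊕ (completeBipartiteGraph (Fin 2) (Fin n)).edgeSet → ℕ,
      IsKSuperGraceful (completeBipartiteGraph (Fin 2) (Fin n)) k f) ↔
    (k = 1 ∨ k = 2 ∨ k = n) := by
  constructor
  · rintro ⟨f, hf⟩
    by_cases h : 3 ≤ k
    · right; right; exact necessity n k h f hn hf
    · omega
  · rintro (rfl | rfl | rfl)
    · refine build n 1 ![2 * n + 1, 3 * n + 2] (fun j => j + 1) ⟨?_, ?_, ?_⟩ ?_
      · intro i; fin_cases i <;> simp <;> omega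
      · intro j; simp; omega
      · intro i j; have := j.2; fin_cases i <;> simp <;> omega
      · rintro m ⟨h1, h2⟩
        by_cases c1 : m ≤ n
        · right; left; exact ⟨⟨m - 1, by omega⟩, by simp; omega⟩
        by_cases c2 : m ≤ 2 * n
        · right; right; exact ⟨0, ⟨2 * n - m, by omega⟩, by simp; omega⟩
        by_cases c3 : m = 2 * n + 1
        · left; exact ⟨0, by simp; omega⟩
        by_cases c4 : m = 3 * n + 2
        · left; exact ⟨1, by simp; omega⟩
        right; right; exact ⟨1, ⟨3 * n + 1 - m, by omega⟩, by simp; omega⟩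
    · refine build n 2 ![3 * n + 2, 3 * n + 3] (fun j => 3 * j + 2) ⟨?_, ?_, ?_⟩ ?_
      · intro i; fin_cases i <;> simp <;> omega
      · intro j; simp; omega
      · intro i j; have := j.2; fin_cases i <;> simp <;> omega
      · rintro m ⟨h1, h2⟩
        by_cases c3 : m = 3 * n + 2
        · left; exact ⟨0, by simp; omega⟩
        by_cases c4 : m = 3 * n + 3
        · left; exact ⟨1, by simp; omega⟩
        by_cases c1 : m % 3 = 2
        · right; left; exact ⟨⟨m / 3, by omega⟩, by simp; omega⟩
        by_cases c2 : m % 3 = 0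
        · right; right; exact ⟨0, ⟨n - m / 3, by omega⟩, by simp; omega⟩
        right; right; exact ⟨1, ⟨n - m / 3, by omega⟩, by simp; omega⟩
    · refine build k k ![k, 2 * k + 1] (fun j => 3 * k + 2 + j) ⟨?_, ?_, ?_⟩ ?_
      · intro i; fin_cases i <;> simp <;> omega
      · intro j; simp; omega
      · intro i j; have := j.2; fin_cases i <;> simp <;> omega
      · rintro m ⟨h1, h2⟩
        by_cases c3 : m = k
        · left; exact ⟨0, by simp; omega⟩
        by_cases c4 : m = 2 * k + 1
        · left; exact ⟨1, by simp; omega⟩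
        by_cases c1 : m ≤ 2 * k
        · right; right; exact ⟨1, ⟨m - (k + 1), by omega⟩, by simp; omega⟩
        by_cases c2 : m ≤ 3 * k + 1
        · right; right; exact ⟨0, ⟨m - (2 * k + 2), by omega⟩, by simp; omega⟩
        right; left; exact ⟨⟨m - (3 * k + 2), by omega⟩, by simp; omega⟩
end

section
/- For every integer n ≥ 2 and r ∈ {2, 3}, the disjoint union P_{n+r} + P_n of a path on n+r vertices and a path on n vertices admits a 2-super graceful labeling whose set of edge labels is exactly {2, 3, …, 2n+r−1}. -/
/-- `HD l d`: some two consecutive entries of `l` differ by `d`. -/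
def HD : List ℕ → ℕ → Prop
  | x :: y :: l, d => (x = y + d ∨ y = x + d) ∨ HD (y :: l) d
  | _, _ => False

theorem HD_cons {l : List ℕ} {d : ℕ} (x : ℕ) (h : HD l d) : HD (x :: l) d := by
  cases l with
  | nil => simp [HD] at h
  | cons y l => exact Or.inr h

theorem HD_shift (l : List ℕ) (d : ℕ) (h : HD l d) : HD (l.map (· + 4)) d := by
  induction l with
  | nil => simp [HD] at h
  | cons x l ih =>
    cases l with
    | nil => simp [HD] at h
    | cons y l =>
      rcases h with h | h
      · left; dsimp only; omega
      · exact Or.inr (ih h)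

theorem HD_split (l : List ℕ) (d : ℕ) (h : HD l d) :
    ∃ s t x y, l = s ++ x :: y :: t ∧ (x = y + d ∨ y = x + d) := by
  induction l with
  | nil => simp [HD] at h
  | cons x l ih =>
    cases l with
    | nil => simp [HD] at h
    | cons y l =>
      rcases h with h | h
      · exact ⟨[], l, x, y, rfl, h⟩
      · obtain ⟨s, t, a, b, e, hh⟩ := ih h
        exact ⟨x :: s, t, a, b, by rw [e]; rfl, hh⟩

/-- The inductive invariant: the short path is `2 :: A`, the long one is
`(1 :: X).reverse ++ (p - 1) :: Y`. -/
def LabInv (n r : ℕ) : Prop := ∃ A X Y : List ℕ,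
  A.length + 1 = n ∧ X.length + Y.length + 2 = n + r ∧
  (∀ v < 2 * n + r, v ∈ 2 :: A ∨ v ∈ 1 :: X ∨ v ∈ (2 * n + r - 1) :: Y) ∧
  (∀ d < 2 * n + r, 2 ≤ d → HD (2 :: A) d ∨ HD (1 :: X) d ∨
    HD ((2 * n + r - 1) :: Y) d ∨ d = 2 * n + r - 2)

theorem Inv_step (n r : ℕ) (hr : 2 ≤ r) (h : LabInv n r) : LabInv (n + 4) r := by
  obtain ⟨A, X, Y, hA, hXY, hv, hd⟩ := h
  obtain ⟨p, hp⟩ : ∃ p, p = 2 * n + r := ⟨_, rfl⟩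
  have hpp : 2 * (n + 4) + r = p + 8 := by omega
  have hp3 : 4 ≤ p := by omega
  rw [← hp] at hv hd
  unfold LabInv
  rw [hpp]
  refine ⟨(p + 6) :: 3 :: (p + 4) :: (2 :: A).map (· + 4),
    ((p - 1) :: Y).map (· + 4), 0 :: (p + 5) :: (1 :: X).map (· + 4), ?_, ?_, ?_, ?_⟩
  · simp; omega
  · simp; omega
  · intro v hvp
    by_cases h4 : v < 4
    · interval_cases v <;> simp
    by_cases h5 : p + 4 ≤ v
    · have : v = p + 4 ∨ v = p + 5 ∨ v = p + 6 ∨ v = p + 7 := by omega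
      rcases this with rfl | rfl | rfl | rfl <;> simp
    have key : ∀ l : List ℕ, v - 4 ∈ l → v ∈ l.map (· + 4) := fun l hl =>
      List.mem_map.2 ⟨v - 4, hl, by omega⟩
    rcases hv (v - 4) (by omega) with h | h | h
    · left; have := key _ h; simp only [List.mem_cons] at this ⊢; tauto
    · right; right; have := key _ h; simp only [List.mem_cons] at this ⊢; tauto
    · right; left; have := key _ h; simp only [List.mem_cons] at this ⊢; tauto
  · intro d hdp h2
    by_cases h5 : p ≤ d
    · have : d = p ∨ d = p + 1 ∨ d = p + 2 ∨ d = p + 3 ∨ d = p + 4 ∨ d = p + 5 ∨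
        d = p + 6 ∨ d = p + 7 := by omega
      simp only [List.map_cons, HD]
      omega
    rcases hd d (by omega) h2 with h | h | h | h
    · left; exact HD_cons _ (HD_cons _ (HD_cons _ (HD_cons _ (HD_shift _ _ h))))
    · right; right; left; exact HD_cons _ (HD_cons _ (HD_cons _ (HD_shift _ _ h)))
    · right; left; exact HD_cons _ (HD_shift _ _ h)
    · simp only [List.map_cons, HD]
      omega

/-- The plain list version of what we need. -/
def Good (n r : ℕ) : Prop := ∃ A B : List ℕ, A.length = n ∧ B.length = n + r ∧
  (∀ v < 2 * n + r, v ∈ A ∨ v ∈ B) ∧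
  (∀ d < 2 * n + r, 2 ≤ d →
    ∃ s t x y, (A = s ++ x :: y :: t ∨ B = s ++ x :: y :: t) ∧ (x = y + d ∨ y = x + d))

theorem Good_of_Inv (n r : ℕ) (hr : 2 ≤ r) (h : LabInv n r) : Good n r := by
  obtain ⟨A, X, Y, hA, hXY, hv, hd⟩ := h
  refine ⟨2 :: A, (1 :: X).reverse ++ (2 * n + r - 1) :: Y, by simpa using hA,
    by simp; omega, ?_, ?_⟩
  · intro v h
    have := hv v h
    simp only [List.mem_append, List.mem_reverse]
    exact this
  · intro d hdp h2
    rcases hd d hdp h2 with h | h | h | h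
    · obtain ⟨s, t, x, y, e, hh⟩ := HD_split _ _ h
      exact ⟨s, t, x, y, Or.inl e, hh⟩
    · obtain ⟨s, t, x, y, e, hh⟩ := HD_split _ _ h
      refine ⟨t.reverse, s.reverse ++ (2 * n + r - 1) :: Y, y, x, Or.inr ?_, hh.symm⟩
      rw [e]; simp
    · obtain ⟨s, t, x, y, e, hh⟩ := HD_split _ _ h
      refine ⟨(1 :: X).reverse ++ s, t, x, y, Or.inr ?_, hh⟩
      rw [e]; simp
    · refine ⟨X.reverse, Y, 1, 2 * n + r - 1, Or.inr (by simp), Or.inr (by omega)⟩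

theorem Inv_base2 : LabInv 1 2 ∧ LabInv 2 2 ∧ LabInv 3 2 ∧ LabInv 8 2 := by
  refine ⟨⟨[], [], [0], rfl, rfl, ?_, ?_⟩, ⟨[4], [], [0, 3], rfl, rfl, ?_, ?_⟩,
    ⟨[5, 3], [6], [0, 4], rfl, rfl, ?_, ?_⟩,
    ⟨[13, 4, 12, 6, 11, 8, 10], [16, 3, 15, 5, 9], [0, 14, 7], rfl, rfl, ?_, ?_⟩⟩
  all_goals
    first
      | (intro v hv; interval_cases v <;> simp <;> done)
      | (intro d hd h2; interval_cases d <;> simp [HD])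

theorem Inv_base3 : LabInv 1 3 ∧ LabInv 2 3 ∧ LabInv 3 3 ∧ LabInv 4 3 := by
  refine ⟨⟨[], [3], [0], rfl, rfl, ?_, ?_⟩, ⟨[4], [5], [0, 3], rfl, rfl, ?_, ?_⟩,
    ⟨[7, 4], [5, 3], [0, 6], rfl, rfl, ?_, ?_⟩,
    ⟨[9, 3, 5], [6], [0, 8, 4, 7], rfl, rfl, ?_, ?_⟩⟩
  all_goals
    first
      | (intro v hv; interval_cases v <;> simp <;> done)
      | (intro d hd h2; interval_cases d <;> simp [HD])

theorem Good_4_2 : Good 4 2 := by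
  refine ⟨[2, 6, 3, 5], [4, 9, 0, 8, 1, 7], rfl, rfl, ?_, ?_⟩
  · intro v hv
    interval_cases v <;> simp
  · intro d hd h2
    have : HD [2, 6, 3, 5] d ∨ HD [4, 9, 0, 8, 1, 7] d := by simp only [HD]; omega
    rcases this with h | h
    · obtain ⟨s, t, x, y, e, hh⟩ := HD_split _ _ h
      exact ⟨s, t, x, y, Or.inl e, hh⟩
    · obtain ⟨s, t, x, y, e, hh⟩ := HD_split _ _ h
      exact ⟨s, t, x, y, Or.inr e, hh⟩

theorem Inv_three (n : ℕ) (hn : 1 ≤ n) : LabInv n 3 := by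
  induction n using Nat.strong_induction_on with
  | _ n ih =>
    by_cases h : n ≤ 4
    · obtain ⟨h1, h2, h3, h4⟩ := Inv_base3
      interval_cases n <;> assumption
    · have := Inv_step (n - 4) 3 (by omega) (ih (n - 4) (by omega) (by omega))
      rwa [show n - 4 + 4 = n by omega] at this

theorem Inv_two (n : ℕ) (hn : 1 ≤ n) (hn4 : n ≠ 4) : LabInv n 2 := by
  induction n using Nat.strong_induction_on with
  | _ n ih =>
    obtain ⟨h1, h2, h3, h8⟩ := Inv_base2
    by_cases h : n ≤ 4
    · interval_cases n <;> first | assumption | omega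
    by_cases hh : n = 8
    · subst hh; exact h8
    · have := Inv_step (n - 4) 2 (by omega) (ih (n - 4) (by omega) (by omega) (by omega))
      rwa [show n - 4 + 4 = n by omega] at this

theorem Good_all (n r : ℕ) (hn : 2 ≤ n) (hr : r = 2 ∨ r = 3) : Good n r := by
  rcases hr with rfl | rfl
  · by_cases h : n = 4
    · subst h; exact Good_4_2
    · exact Good_of_Inv _ _ (by omega) (Inv_two n (by omega) h)
  · exact Good_of_Inv _ _ (by omega) (Inv_three n (by omega))

/-- Label of an edge. -/
def edgeLab {V : Type} (g : V → ℕ) : Sym2 V → ℕ :=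
  Sym2.lift ⟨fun u v => max (g u) (g v) - min (g u) (g v), fun u v => by
    dsimp only; rw [max_comm, min_comm]⟩

/-- Upper bound for the number of edges. -/
theorem edges_le (a b : ℕ) (ha : 1 ≤ a) (hb : 1 ≤ b) :
    Nat.card (SimpleGraph.pathGraph a ⊕g SimpleGraph.pathGraph b).edgeSet ≤ a + b - 2 := by
  let G := SimpleGraph.pathGraph a ⊕g SimpleGraph.pathGraph b
  let F : Fin (a - 1) ⊕ Fin (b - 1) → Sym2 (Fin a ⊕ Fin b) := fun s => match s with
    | Sum.inl i => s(Sum.inl ⟨i, by omega⟩, Sum.inl ⟨i + 1, by omega⟩)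
    | Sum.inr i => s(Sum.inr ⟨i, by omega⟩, Sum.inr ⟨i + 1, by omega⟩)
  have hsub : G.edgeSet ⊆ Set.range F := by
    intro e
    induction e using Sym2.ind with
    | _ u v =>
      intro h
      rw [SimpleGraph.mem_edgeSet] at h
      rcases u with u | u <;> rcases v with v | v
      · have hh : (SimpleGraph.pathGraph a).Adj u v := by simpa [G] using h
        rw [SimpleGraph.pathGraph_adj] at hh
        rcases hh with hh | hh
        · refine ⟨Sum.inl ⟨u, by omega⟩, ?_⟩
          have : v = ⟨u + 1, by omega⟩ := Fin.ext hh.symm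
          simp [F, this]
        · refine ⟨Sum.inl ⟨v, by omega⟩, ?_⟩
          have : u = ⟨v + 1, by omega⟩ := Fin.ext hh.symm
          simp [F, this]
      · simp [G] at h
      · simp [G] at h
      · have hh : (SimpleGraph.pathGraph b).Adj u v := by simpa [G] using h
        rw [SimpleGraph.pathGraph_adj] at hh
        rcases hh with hh | hh
        · refine ⟨Sum.inr ⟨u, by omega⟩, ?_⟩
          have : v = ⟨u + 1, by omega⟩ := Fin.ext hh.symm
          simp [F, this]
        · refine ⟨Sum.inr ⟨v, by omega⟩, ?_⟩
          have : u = ⟨v + 1, by omega⟩ := Fin.ext hh.symm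
          simp [F, this]
  have h1 : G.edgeSet.ncard ≤ (Set.range F).ncard :=
    Set.ncard_le_ncard hsub (Set.finite_range F)
  have h2 : (Set.range F).ncard ≤ Nat.card (Fin (a - 1) ⊕ Fin (b - 1)) := by
    rw [← Nat.card_coe_set_eq]
    exact Finite.card_range_le F
  have h3 : Nat.card (Fin (a - 1) ⊕ Fin (b - 1)) = a + b - 2 := by
    simp; omega
  rw [Nat.card_coe_set_eq]
  change G.edgeSet.ncard ≤ _
  omega

/-- A map from a small finite type that covers an interval is a bijection onto it. -/
theorem cover_bij {α : Type} [Finite α] (f : α → ℕ) (a b : ℕ)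
    (hc : Nat.card α ≤ b + 1 - a) (hf : ∀ x, a ≤ x → x ≤ b → ∃ y, f y = x) :
    Function.Injective f ∧ Set.range f = Set.Icc a b ∧ Nat.card α = b + 1 - a := by
  have hsub : Set.Icc a b ⊆ Set.range f := fun x hx => hf x hx.1 hx.2
  have hI : (Set.Icc a b).ncard = b + 1 - a := by
    rw [Set.ncard_eq_toFinset_card']; simp
  have h1 := Set.ncard_le_ncard hsub (Set.finite_range f)
  have h2 : (Set.range f).ncard ≤ Nat.card α := by
    rw [← Nat.card_coe_set_eq]; exact Finite.card_range_le f
  have heq : Set.Icc a b = Set.range f :=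
    Set.eq_of_subset_of_ncard_le hsub (by omega) (Set.finite_range f)
  refine ⟨?_, heq.symm, by omega⟩
  have hs : Function.Bijective (Set.rangeFactorization f) := by
    rw [Nat.bijective_iff_surjective_and_card]
    refine ⟨Set.rangeFactorization_surjective, ?_⟩
    rw [Nat.card_coe_set_eq]; omega
  intro x y hxy
  exact hs.1 (Subtype.ext hxy)

theorem adj_of_split (m : ℕ) (l s t : List ℕ) (x y : ℕ) (hl : l.length = m)
    (e : l = s ++ x :: y :: t) :
    ∃ i j : Fin m, (SimpleGraph.pathGraph m).Adj i j ∧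
      l.getD i 0 = x ∧ l.getD j 0 = y := by
  subst e
  simp at hl
  refine ⟨⟨s.length, by omega⟩, ⟨s.length + 1, by omega⟩, ?_, ?_, ?_⟩
  · rw [SimpleGraph.pathGraph_adj]; left; rfl
  · simp
  · simp

/-- For `n ≥ 2` and `r ∈ {2, 3}`, the disjoint union `P_{n+r} + P_n` of two paths
is `2`-super graceful with edge-label set `{2, …, 2n+r-1}`. -/
theorem stmt_19 (n r : ℕ) (hn : 2 ≤ n) (hr : r = 2 ∨ r = 3) :
    ∃ f : (Fin (n + r) ⊕ Fin n) ⊕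
        (SimpleGraph.pathGraph (n + r) ⊕g SimpleGraph.pathGraph n).edgeSet → ℕ,
      IsKSuperGraceful (SimpleGraph.pathGraph (n + r) ⊕g SimpleGraph.pathGraph n) 2 f ∧
      Set.range (fun e : (SimpleGraph.pathGraph (n + r) ⊕g
          SimpleGraph.pathGraph n).edgeSet => f (Sum.inr e)) =
        Set.Icc 2 (2 * n + r - 1) := by
  obtain ⟨A, B, hA, hB, hv, hd⟩ := Good_all n r hn hr
  let G := SimpleGraph.pathGraph (n + r) ⊕g SimpleGraph.pathGraph n
  let g : Fin (n + r) ⊕ Fin n → ℕ :=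
    Sum.elim (fun i => B.getD i 0 + (2 * n + r)) (fun i => A.getD i 0 + (2 * n + r))
  let f : (Fin (n + r) ⊕ Fin n) ⊕ G.edgeSet → ℕ := Sum.elim g (fun e => edgeLab g e.1)
  have hE : ∀ d, 2 ≤ d → d ≤ 2 * n + r - 1 → ∃ e : G.edgeSet, edgeLab g e.1 = d := by
    intro d h2 hdp
    obtain ⟨s, t, x, y, e, h⟩ := hd d (by omega) h2
    rcases e with e | e
    · obtain ⟨i, j, hij, hi, hj⟩ := adj_of_split _ _ _ _ _ _ hA e
      refine ⟨⟨s(Sum.inr i, Sum.inr j), by simpa [G] using hij⟩, ?_⟩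
      simp only [edgeLab, Sym2.lift_mk, g, Sum.elim_inr, hi, hj]
      omega
    · obtain ⟨i, j, hij, hi, hj⟩ := adj_of_split _ _ _ _ _ _ hB e
      refine ⟨⟨s(Sum.inl i, Sum.inl j), by simpa [G] using hij⟩, ?_⟩
      simp only [edgeLab, Sym2.lift_mk, g, Sum.elim_inl, hi, hj]
      omega
  have hV : ∀ v, 2 * n + r ≤ v → v ≤ 4 * n + 2 * r - 1 → ∃ u, g u = v := by
    intro v h1 h2
    rcases hv (v - (2 * n + r)) (by omega) with h | h
    · obtain ⟨i, hi, e⟩ := List.mem_iff_getElem.1 h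
      refine ⟨Sum.inr ⟨i, by omega⟩, ?_⟩
      simp only [g, Sum.elim_inr, List.getD_eq_getElem _ _ hi, e]
      omega
    · obtain ⟨i, hi, e⟩ := List.mem_iff_getElem.1 h
      refine ⟨Sum.inl ⟨i, by omega⟩, ?_⟩
      simp only [g, Sum.elim_inl, List.getD_eq_getElem _ _ hi, e]
      omega
  have hle : Nat.card G.edgeSet ≤ n + r + n - 2 := edges_le (n + r) n (by omega) (by omega)
  obtain ⟨-, hEr, hEc⟩ := cover_bij (fun e : G.edgeSet => edgeLab g e.1) 2 (2 * n + r - 1)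
    (by omega) hE
  have hcV : Fintype.card (Fin (n + r) ⊕ Fin n) = 2 * n + r := by simp; omega
  have hcf : Nat.card ((Fin (n + r) ⊕ Fin n) ⊕ G.edgeSet) = 4 * n + 2 * r - 2 := by
    rw [Nat.card_sum, Nat.card_eq_fintype_card, hcV]; omega
  obtain ⟨hinj, hrange, -⟩ := cover_bij f 2 (4 * n + 2 * r - 1) (by omega) (by
    intro x h1 h2
    by_cases h : x ≤ 2 * n + r - 1
    · obtain ⟨e, he⟩ := hE x h1 h
      exact ⟨Sum.inr e, he⟩
    · obtain ⟨u, hu⟩ := hV x (by omega) h2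
      exact ⟨Sum.inl u, hu⟩)
  refine ⟨f, ⟨hinj, ?_, ?_⟩, hEr⟩
  · rw [hrange, hcV]
    congr 1
    have : G.edgeSet.ncard = 2 * n + r - 1 + 1 - 2 := by rw [← Nat.card_coe_set_eq]; exact hEc
    change _ = 2 + (2 * n + r) + G.edgeSet.ncard - 1
    omega
  · intro u v h
    rfl
end
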